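/- Let a ∈ {1/6, 1/4, 1/3, 1/2}. Then the Riemann hypothesis holds if and only if every non-real zero s of the function s ↦ Z(s,a) satisfies Re s = 1/2 or Re s = 0; likewise, the Riemann hypothesis holds if and only if every non-real zero s of the function s ↦ P(s,a) satisfies Re s = 1/2 or Re s = 1. -/

import Mathlib

open HurwitzZeta Complex

/-- `Z(s,a) = ζ(s,a) + ζ(s,1−a)`. -/
noncomputable def Zf (a : ℝ) : ℂ → ℂ :=
  fun s => hurwitzZeta a s + hurwitzZeta (1 - a : ℝ) s

/-- `P(s,a) = Li_s(e^{2πia}) + Li_s(e^{2πi(1−a)})`. -/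
noncomputable def Pf (a : ℝ) : ℂ → ℂ :=
  fun s => expZeta a s + expZeta (1 - a : ℝ) s

/-! The functions `Z(·, a)` and `P(·, a)` are twice the even Hurwitz zeta function and twice the
cosine zeta function, so the functional equation `s ↦ 1 - s` interchanges their non-real zeros. If
`a = k / N` in lowest terms with `φ(N) ≤ 2`, then `±k` are the only units modulo `N`, hence the
`L`-function of the trivial character modulo `N` involves only the single even Hurwitz zeta
function at `a`. Thus `Z(s, a)` is `ζ(s)` times a non-zero multiple of the product of the Euler
factors `1 - p ^ (-s)`, `p ∣ N`, which vanish only on the line `Re s = 0`; and `ζ` has no non-real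
zero on that line. -/

theorem coe_one_sub_eq_neg (a : ℝ) : ((1 - a : ℝ) : UnitAddCircle) = -a := by
  rw [AddCircle.coe_sub, AddCircle.coe_period, zero_sub]

theorem Zf_eq_two_mul_hurwitzZetaEven (a : ℝ) (s : ℂ) : Zf a s = 2 * hurwitzZetaEven a s := by
  rw [Zf, coe_one_sub_eq_neg, hurwitzZetaEven_eq, mul_div_cancel₀ _ two_ne_zero]

theorem Pf_eq_two_mul_cosZeta (a : ℝ) (s : ℂ) : Pf a s = 2 * cosZeta a s := by
  rw [Pf, coe_one_sub_eq_neg, cosZeta_eq, mul_div_cancel₀ _ two_ne_zero]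

theorem Gammaℝ_ne_zero_of_im_ne_zero {s : ℂ} (hs : s.im ≠ 0) : Gammaℝ s ≠ 0 := by
  rw [Ne, Gammaℝ_eq_zero_iff]
  rintro ⟨n, rfl⟩
  simp at hs

theorem cosZeta_one_sub_eq_zero_iff (a : UnitAddCircle) {s : ℂ} (hs : s.im ≠ 0) :
    cosZeta a (1 - s) = 0 ↔ hurwitzZetaEven a s = 0 := by
  have hs' : (1 - s).im ≠ 0 := by simpa using hs
  have h0 : s ≠ 0 := fun h ↦ hs (by simp [h])
  have h1 : 1 - s ≠ 0 := fun h ↦ hs' (by simp [h])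
  rw [cosZeta, Function.update_of_ne h1, hurwitzZetaEven_def_of_ne_or_ne (.inr h0),
    completedCosZeta_one_sub, div_eq_zero_iff, div_eq_zero_iff,
    or_iff_left (Gammaℝ_ne_zero_of_im_ne_zero hs), or_iff_left (Gammaℝ_ne_zero_of_im_ne_zero hs')]

theorem Pf_one_sub_eq_zero_iff (a : ℝ) {s : ℂ} (hs : s.im ≠ 0) :
    Pf a (1 - s) = 0 ↔ Zf a s = 0 := by
  simp only [Pf_eq_two_mul_cosZeta, Zf_eq_two_mul_hurwitzZetaEven, mul_eq_zero, two_ne_zero,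
    false_or, cosZeta_one_sub_eq_zero_iff _ hs]

theorem riemannZeta_ne_zero_of_re_nonpos {s : ℂ} (hre : s.re ≤ 0) (him : s.im ≠ 0) :
    riemannZeta s ≠ 0 := by
  rw [← hurwitzZetaEven_zero, Ne, ← cosZeta_one_sub_eq_zero_iff 0 him, cosZeta_zero]
  exact riemannZeta_ne_zero_of_one_le_re (by simpa using hre)

theorem re_eq_zero_of_natCast_cpow_eq_one {n : ℕ} (hn : 1 < n) {s : ℂ} (h : (n : ℂ) ^ s = 1) :
    s.re = 0 := by
  have norm_eq : (n : ℝ) ^ s.re = (n : ℝ) ^ (0 : ℝ) := by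
    rw [← norm_natCast_cpow_of_pos (by lia), h, norm_one, Real.rpow_zero]
  exact (Real.rpow_right_inj (by positivity) (by exact_mod_cast hn.ne')).mp norm_eq

section TotientLeTwo

variable {N : ℕ} [NeZero N]

theorem units_eq_or_eq_neg_of_totient_le_two (hN : N.totient ≤ 2) (u v : (ZMod N)ˣ) :
    u = v ∨ u = -v := by
  rw [← ZMod.card_units_eq_totient] at hN
  obtain hN2 | hN2 := le_or_gt N 2
  · have card_le_one : Fintype.card (ZMod N)ˣ ≤ 1 := by
      rw [ZMod.card_units_eq_totient]
      interval_cases N <;> decide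
    exact .inl (Fintype.card_le_one_iff.mp card_le_one u v)
  · have : Fact (2 < N) := ⟨hN2⟩
    have v_ne_neg : v ≠ -v := fun h ↦ ZMod.neg_one_ne_one (n := N) <| by
      simpa using congrArg Units.val (congrArg (v⁻¹ * ·) h).symm
    by_contra! ⟨u_ne, u_ne_neg⟩
    exact hN.not_gt
      (Fintype.two_lt_card_iff.mpr ⟨v, -v, u, v_ne_neg, u_ne.symm, u_ne_neg.symm⟩)

theorem totient_mul_hurwitzZetaEven_toAddCircle (hN : N.totient ≤ 2) (u : (ZMod N)ˣ) {s : ℂ}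
    (hs : s ≠ 1) :
    N.totient * hurwitzZetaEven (ZMod.toAddCircle (u : ZMod N)) s =
      N ^ s * ((∏ p ∈ N.primeFactors, (1 - (p : ℂ) ^ (-s))) * riemannZeta s) := by
  have const_on_units (j : ZMod N) :
      (1 : DirichletCharacter ℂ N) j * hurwitzZetaEven (ZMod.toAddCircle j) s =
        (1 : DirichletCharacter ℂ N) j * hurwitzZetaEven (ZMod.toAddCircle (u : ZMod N)) s := by
    by_cases hj : IsUnit j
    · obtain ⟨v, rfl⟩ := hj
      obtain rfl | rfl := units_eq_or_eq_neg_of_totient_le_two hN v u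
      · rfl
      · rw [Units.val_neg, map_neg (ZMod.toAddCircle (N := N)), hurwitzZetaEven_neg]
    · simp only [MulChar.map_nonunit _ hj, zero_mul]
  have trivial_even : Function.Even (1 : DirichletCharacter ℂ N) :=
    DirichletCharacter.Even.to_fun (MulChar.one_apply isUnit_one.neg)
  have sum_eq : ∑ j : ZMod N, (1 : DirichletCharacter ℂ N) j *
      hurwitzZetaEven (ZMod.toAddCircle j) s =
        N.totient * hurwitzZetaEven (ZMod.toAddCircle (u : ZMod N)) s := by
    rw [Finset.sum_congr rfl fun j _ ↦ const_on_units j, ← Finset.sum_mul,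
      MulChar.sum_one_eq_card_units, ZMod.card_units_eq_totient]
  rw [← DirichletCharacter.LFunctionTrivChar_eq_mul_riemannZeta hs,
    DirichletCharacter.LFunctionTrivChar, DirichletCharacter.LFunction,
    ZMod.LFunction_def_even trivial_even, sum_eq, ← mul_assoc,
    ← cpow_add _ _ (NeZero.ne (N : ℂ)), add_neg_cancel, cpow_zero, one_mul]

end TotientLeTwo

theorem Zf_ratCast_eq_zero_iff {q : ℚ} (hq : q.den.totient ≤ 2) {s : ℂ} (hs : s ≠ 1) :
    Zf q s = 0 ↔ (∃ p ∈ q.den.primeFactors, (p : ℂ) ^ (-s) = 1) ∨ riemannZeta s = 0 := by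
  have : NeZero q.den := ⟨q.den_ne_zero⟩
  obtain ⟨u, hu⟩ : IsUnit (q.num : ZMod q.den) :=
    (ZMod.coe_int_isUnit_iff_isCoprime _ _).mpr q.isCoprime_num_den.symm
  have coe_eq : ZMod.toAddCircle (u : ZMod q.den) = ((q : ℝ) : UnitAddCircle) := by
    rw [hu, ZMod.toAddCircle_intCast, ← Rat.cast_def]
  have totient_ne_zero : (q.den.totient : ℂ) ≠ 0 := by
    exact_mod_cast (Nat.totient_pos.mpr q.den_pos).ne'
  have cpow_ne_zero : (q.den : ℂ) ^ s ≠ 0 := by simp [cpow_eq_zero_iff]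
  rw [Zf_eq_two_mul_hurwitzZetaEven, mul_eq_zero_iff_left two_ne_zero, ← coe_eq,
    ← mul_eq_zero_iff_left totient_ne_zero, totient_mul_hurwitzZetaEven_toAddCircle hq u hs,
    mul_eq_zero_iff_left cpow_ne_zero, mul_eq_zero, Finset.prod_eq_zero_iff]
  simp only [sub_eq_zero, eq_comm (a := (1 : ℂ))]

theorem zeros_Zf_iff_zeros_Pf (a : ℝ) :
    (∀ s : ℂ, Zf a s = 0 → s.im ≠ 0 → (s.re = 1 / 2 ∨ s.re = 0)) ↔
      (∀ s : ℂ, Pf a s = 0 → s.im ≠ 0 → (s.re = 1 / 2 ∨ s.re = 1)) := by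
  rw [← (Equiv.subLeft (1 : ℂ)).forall_congr_right (q := fun s ↦ Pf a s = 0 → _)]
  refine forall_congr' fun s ↦ ?_
  by_cases hs : s.im = 0
  · simp [hs]
  · have half_iff : 1 - s.re = 1 / 2 ↔ s.re = 1 / 2 := by constructor <;> intro <;> linarith
    simp only [Equiv.subLeft_apply, Pf_one_sub_eq_zero_iff a hs, sub_im, one_im, zero_sub,
      neg_ne_zero, sub_re, one_re, half_iff, sub_eq_self]

theorem RH_iff_zeros_Zf {q : ℚ} (hq : q.den.totient ≤ 2) :
    (∀ s : ℂ, riemannZeta s = 0 → s.im ≠ 0 → s.re = 1 / 2) ↔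
      (∀ s : ℂ, Zf q s = 0 → s.im ≠ 0 → (s.re = 1 / 2 ∨ s.re = 0)) := by
  refine forall_congr' fun s ↦ ?_
  by_cases him : s.im = 0
  · simp only [him, ne_eq, not_true_eq_false, false_imp_iff, imp_true_iff]
  have hs : s ≠ 1 := fun h ↦ him (by simp [h])
  rw [Zf_ratCast_eq_zero_iff hq hs]
  constructor
  · rintro hRH (⟨p, hp, hps⟩ | hζ) -
    · have := re_eq_zero_of_natCast_cpow_eq_one (Nat.prime_of_mem_primeFactors hp).one_lt hps
      exact .inr (by simpa using this)
    · exact .inl (hRH hζ him)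
  · intro hZ hζ _
    exact (hZ (.inr hζ) him).resolve_right fun hre ↦
      riemannZeta_ne_zero_of_re_nonpos hre.le him hζ

theorem RH_iff_zeros_Z_P_general (q : ℚ) (hq : q.den.totient ≤ 2) :
    ((∀ s : ℂ, riemannZeta s = 0 → s.im ≠ 0 → s.re = 1 / 2) ↔
      (∀ s : ℂ, Zf q s = 0 → s.im ≠ 0 → (s.re = 1 / 2 ∨ s.re = 0))) ∧
    ((∀ s : ℂ, riemannZeta s = 0 → s.im ≠ 0 → s.re = 1 / 2) ↔
      (∀ s : ℂ, Pf q s = 0 → s.im ≠ 0 → (s.re = 1 / 2 ∨ s.re = 1))) :=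
  ⟨RH_iff_zeros_Zf hq, (RH_iff_zeros_Zf hq).trans (zeros_Zf_iff_zeros_Pf q)⟩

theorem exists_rat_totient_den_le_two {a : ℝ}
    (ha : a ∈ ({1 / 6, 1 / 4, 1 / 3, 1 / 2} : Set ℝ)) : ∃ q : ℚ, q.den.totient ≤ 2 ∧ a = q := by
  obtain ⟨n, hn, ha⟩ : ∃ n ∈ ({6, 4, 3, 2} : Finset ℕ), a = 1 / n := by simpa using ha
  have den_eq : ((n : ℚ)⁻¹).den = n := Rat.inv_natCast_den_of_pos (by fin_cases hn <;> decide)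
  refine ⟨(n : ℚ)⁻¹, ?_, by simp [ha]⟩
  rw [den_eq]
  fin_cases hn <;> decide

/-- For `a ∈ {1/6, 1/4, 1/3, 1/2}`, the Riemann hypothesis (every non-real zero
of `ζ` has real part `1/2`) holds iff every non-real zero of `Z(·,a)` lies on the lines
`Re s = 1/2` or `Re s = 0`, and likewise iff every non-real zero of `P(·,a)` lies on the
lines `Re s = 1/2` or `Re s = 1`. -/
theorem RH_iff_zeros_Z_P (a : ℝ)
    (ha : a ∈ ({1 / 6, 1 / 4, 1 / 3, 1 / 2} : Set ℝ)) :
    ((∀ s : ℂ, riemannZeta s = 0 → s.im ≠ 0 → s.re = 1 / 2) ↔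
      (∀ s : ℂ, Zf a s = 0 → s.im ≠ 0 → (s.re = 1 / 2 ∨ s.re = 0))) ∧
    ((∀ s : ℂ, riemannZeta s = 0 → s.im ≠ 0 → s.re = 1 / 2) ↔
      (∀ s : ℂ, Pf a s = 0 → s.im ≠ 0 → (s.re = 1 / 2 ∨ s.re = 1))) := by
  obtain ⟨q, hq, rfl⟩ := exists_rat_totient_den_le_two ha
  exact RH_iff_zeros_Z_P_general q hq
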